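/- Let V = ⊕_{l=0}^{L} V_l be a finite-dimensional K-vector space and f_1,…,f_r K-linear endomorphisms of V with f_i(V_l) ⊆ ⊕_{u=l+1}^{L} V_u for all i, l, and let M be the resulting Λ-module on V in which the generator X_i acts as f_i. Then for every m ∈ {0,…,L}: the equalities dim_K(J^l M/J^{l+1} M) = dim_K V_l hold for all 0 ≤ l ≤ m if and only if, for every 0 ≤ l ≤ m, the subspace ∑ f_{i_s}∘⋯∘f_{i_1}(V_l), where the sum ranges over all nonempty compositions of the maps f_1,…,f_r, contains ⊕_{u=l+1}^{L} V_u. In particular, rad(M) = (dim_K V_0,…,dim_K V_L) if and only if for every 0 ≤ l < L the image of the subspace ∑_{i=1}^{r} f_i(V_l) in the quotient space V/(⊕_{u=l+2}^{L} V_u) has dimension equal to dim_K V_{l+1}. -/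

import Mathlib

noncomputable section

/-- The relation on the free algebra killing all products of `L+1` generators. -/
def TruncRel (K : Type*) [Field K] (r L : ℕ) :
    FreeAlgebra K (Fin r) → FreeAlgebra K (Fin r) → Prop := fun a b =>
  (∃ f : Fin (L + 1) → Fin r, a = (List.ofFn fun j => FreeAlgebra.ι K (f j)).prod) ∧ b = 0

/-- The local truncated path algebra with `r` loops and Loewy length `L+1`:
the quotient of `K⟨X_1,…,X_r⟩` by the two-sided ideal generated by all products
of `L+1` generators. -/
def TruncAlg (K : Type*) [Field K] (r L : ℕ) : Type _ := RingQuot (TruncRel K r L)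

instance (K : Type*) [Field K] (r L : ℕ) : Ring (TruncAlg K r L) :=
  inferInstanceAs (Ring (RingQuot _))

instance (K : Type*) [Field K] (r L : ℕ) : Algebra K (TruncAlg K r L) :=
  inferInstanceAs (Algebra K (RingQuot _))

/-- The images of the generators `X i` in the truncated algebra. -/
def gen (K : Type*) [Field K] (r L : ℕ) (i : Fin r) : TruncAlg K r L :=
  RingQuot.mkAlgHom K (TruncRel K r L) (FreeAlgebra.ι K i)

/-- The two-sided ideal `J` of `Λ` generated by the images of `X_1,…,X_r`,
realized as a `K`-submodule of `Λ`. -/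
def Jrad (K : Type*) [Field K] (r L : ℕ) : Submodule K (TruncAlg K r L) :=
  ⊤ * Submodule.span K (Set.range (gen K r L)) * ⊤

/-- `J^l M`, the submodule of `M` given by the action of `J^l`. -/
def jpow (K : Type*) [Field K] (r L : ℕ) (M : Type*) [AddCommGroup M] [Module K M]
    [Module (TruncAlg K r L) M] [IsScalarTower K (TruncAlg K r L) M] (l : ℕ) :
    Submodule (TruncAlg K r L) M :=
  Submodule.span (TruncAlg K r L)
    {x : M | ∃ a ∈ (Jrad K r L ^ l : Submodule K (TruncAlg K r L)), ∃ m : M, x = a • m}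

/-- The socle of a module: the supremum of all simple submodules. -/
def socle (R N : Type*) [Ring R] [AddCommGroup N] [Module R N] : Submodule R N :=
  sSup {p : Submodule R N | IsSimpleModule R ↥p}

/-- The socle series: `socSeries R M l` is `soc_{l-1} M`, so `socSeries R M 0 = soc_{-1} M = ⊥`
and `socSeries R M (l+1) = soc_l M` is the preimage in `M` of `soc (M / soc_{l-1} M)`. -/
def socSeries (R M : Type*) [Ring R] [AddCommGroup M] [Module R M] : ℕ → Submodule R M
  | 0 => ⊥
  | l + 1 => Submodule.comap (socSeries R M l).mkQ (socle R (M ⧸ socSeries R M l))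

/-- Dimension of the subquotient `q / (p ⊓ q)`; for `p ≤ q` this is `dim (q/p)`. -/
def quotDim (K M : Type*) [Field K] [AddCommGroup M] [Module K M]
    (p q : Submodule K M) : ℕ :=
  Module.finrank K (↥q ⧸ Submodule.comap q.subtype p)

/-- The radical layering `rad(M) = (dim_K J^l M / J^{l+1} M)_{l=0,…,L}`. -/
def radLayering (K : Type*) [Field K] (r L : ℕ) (M : Type*) [AddCommGroup M] [Module K M]
    [Module (TruncAlg K r L) M] [IsScalarTower K (TruncAlg K r L) M] : Fin (L + 1) → ℕ :=
  fun l => quotDim K M ((jpow K r L M ((l : ℕ) + 1)).restrictScalars K)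
    ((jpow K r L M (l : ℕ)).restrictScalars K)

/-- The socle layering `socseq(M) = (dim_K soc_l M / soc_{l-1} M)_{l=0,…,L}`. -/
def socLayering (K : Type*) [Field K] (r L : ℕ) (M : Type*) [AddCommGroup M] [Module K M]
    [Module (TruncAlg K r L) M] [IsScalarTower K (TruncAlg K r L) M] : Fin (L + 1) → ℕ :=
  fun l => quotDim K M ((socSeries (TruncAlg K r L) M (l : ℕ)).restrictScalars K)
    ((socSeries (TruncAlg K r L) M ((l : ℕ) + 1)).restrictScalars K)

/-- The dominance order on `ℕ^{L+1}`: `a ≼ b` iff all partial sums satisfy `≤`. -/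
def DomLE (L : ℕ) (a b : Fin (L + 1) → ℕ) : Prop :=
  ∀ l : Fin (L + 1), ∑ j ∈ Finset.Iic l, a j ≤ ∑ j ∈ Finset.Iic l, b j

/-- `reverse (a_0, …, a_L) = (a_L, …, a_0)`. -/
def revTuple (L : ℕ) (a : Fin (L + 1) → ℕ) : Fin (L + 1) → ℕ := fun l => a l.rev

/-- Given a `K`-algebra morphism `φ : Λ → End_K V` (a `Λ`-module structure on `V`),
the `K`-subspace `J^l V = {Σ φ(a_i)(m_i) | a_i ∈ J^l}`. -/
def phiLayer (K : Type*) [Field K] (r L : ℕ) (V : Type*) [AddCommGroup V] [Module K V]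
    (φ : TruncAlg K r L →ₐ[K] Module.End K V) (l : ℕ) : Submodule K V :=
  Submodule.span K
    {x : V | ∃ a ∈ (Jrad K r L ^ l : Submodule K (TruncAlg K r L)), ∃ m : V, x = φ a m}

/-- The radical layering of the `Λ`-module structure on `V` given by `φ`. -/
def phiRad (K : Type*) [Field K] (r L : ℕ) (V : Type*) [AddCommGroup V] [Module K V]
    (φ : TruncAlg K r L →ₐ[K] Module.End K V) : Fin (L + 1) → ℕ :=
  fun l => quotDim K V (phiLayer K r L V φ ((l : ℕ) + 1)) (phiLayer K r L V φ (l : ℕ))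


section Aux

variable {K : Type*} [Field K] {V : Type*} [AddCommGroup V] [Module K V] {r : ℕ}

def FF (f : Fin r → Module.End K V) (X : Submodule K V) : Submodule K V :=
  ⨆ i, X.map (f i)

theorem FF_mono (f : Fin r → Module.End K V) : Monotone (FF f) := fun _ _ h =>
  iSup_mono fun _ => Submodule.map_mono h

theorem FF_sup (f : Fin r → Module.End K V) (X Y : Submodule K V) :
    FF f (X ⊔ Y) = FF f X ⊔ FF f Y := by
  simp only [FF, Submodule.map_sup, iSup_sup_eq]

theorem FF_mem (f : Fin r → Module.End K V) (X : Submodule K V) (i : Fin r) {x : V}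
    (hx : x ∈ X) : f i x ∈ FF f X :=
  (le_iSup (fun i => X.map (f i)) i) (Submodule.mem_map_of_mem hx)

theorem FF_iter_succ_le (f : Fin r → Module.End K V) {X : Submodule K V} (h : FF f X ≤ X)
    (n : ℕ) : (FF f)^[n + 1] X ≤ (FF f)^[n] X := by
  rw [Function.iterate_succ_apply]
  exact (FF_mono f).iterate n h

def SS (f : Fin r → Module.End K V) (X : Submodule K V) : Submodule K V :=
  ⨆ (c : List (Fin r)) (_ : c ≠ []), X.map (c.map f).prod

theorem map_prod_le (f : Fin r → Module.End K V) {W : Submodule K V} (h : FF f W ≤ W)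
    (c : List (Fin r)) : W.map (c.map f).prod ≤ W := by
  induction c with
  | nil => rintro _ ⟨x, hx, rfl⟩; simpa using hx
  | cons i c ih =>
    rintro _ ⟨x, hx, rfl⟩
    simp only [List.map_cons, List.prod_cons, Module.End.mul_apply]
    exact h (FF_mem f W i (ih (Submodule.mem_map_of_mem hx)))

theorem SS_le (f : Fin r → Module.End K V) {X W : Submodule K V} (h : FF f W ≤ W)
    (hX : X ≤ W) : SS f X ≤ FF f W := by
  refine iSup₂_le fun c hc => ?_
  cases c with
  | nil => exact absurd rfl hc
  | cons i c =>
    rintro _ ⟨x, hx, rfl⟩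
    simp only [List.map_cons, List.prod_cons, Module.End.mul_apply]
    exact FF_mem f W i (map_prod_le f h c (Submodule.mem_map_of_mem (hX hx)))

theorem FF_le_SS (f : Fin r → Module.End K V) (X : Submodule K V) :
    FF f (X ⊔ SS f X) ≤ SS f X := by
  rw [FF_sup]
  refine sup_le (iSup_le fun i => ?_) (iSup_le fun i => ?_)
  · refine le_trans ?_ (le_iSup₂ (f := fun (c : List (Fin r)) (_ : c ≠ []) =>
      X.map (c.map f).prod) [i] (by simp))
    simp
  · simp only [SS, Submodule.map_iSup]
    refine iSup₂_le fun c _ => ?_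
    refine le_trans ?_ (le_iSup₂ (f := fun (c : List (Fin r)) (_ : c ≠ []) =>
      X.map (c.map f).prod) (i :: c) (by simp))
    rw [List.map_cons, List.prod_cons, Module.End.mul_eq_comp, Submodule.map_comp]

theorem naka (f : Fin r → Module.End K V) {X W : Submodule K V} (h : W ≤ X ⊔ FF f W)
    (n : ℕ) (hn : (FF f)^[n] W = ⊥) : FF f W ≤ SS f X := by
  have key : ∀ k, W ≤ (X ⊔ SS f X) ⊔ (FF f)^[k] W := by
    intro k
    induction k with
    | zero => exact le_sup_right
    | succ k ih =>
      refine h.trans (sup_le (le_sup_left.trans le_sup_left) ?_)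
      refine (FF_mono f ih).trans ?_
      rw [FF_sup, Function.iterate_succ_apply']
      exact sup_le_sup_right ((FF_le_SS f X).trans le_sup_right) _
  have := key n
  rw [hn, sup_bot_eq] at this
  exact (FF_mono f this).trans (FF_le_SS f X)

theorem finrank_map_mkQ [FiniteDimensional K V] (A W : Submodule K V) :
    Module.finrank K (A.map W.mkQ) + Module.finrank K W = Module.finrank K ↥(A ⊔ W) := by
  have h := LinearMap.finrank_range_add_finrank_ker (W.mkQ.domRestrict A)
  have h1 : LinearMap.range (W.mkQ.domRestrict A) = A.map W.mkQ := by
    rw [LinearMap.domRestrict, LinearMap.range_comp, Submodule.range_subtype]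
  have h2 : Module.finrank K (LinearMap.ker (W.mkQ.domRestrict A))
      = Module.finrank K ↥(A ⊓ W) := by
    rw [LinearMap.ker_domRestrict, Submodule.ker_mkQ]
    have := LinearEquiv.finrank_eq (Submodule.equivMapOfInjective A.subtype
      A.injective_subtype (W.submoduleOf A))
    rw [Submodule.submoduleOf, Submodule.map_comap_subtype] at this
    exact this
  have h3 := Submodule.finrank_sup_add_finrank_inf_eq A W
  rw [h1, h2] at h
  omega

theorem quotDim_add [FiniteDimensional K V] {p q : Submodule K V} (h : p ≤ q) :
    quotDim K V p q + Module.finrank K p = Module.finrank K q := by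
  have h1 := Submodule.finrank_quotient_add_finrank (Submodule.comap q.subtype p)
  have h2 := LinearEquiv.finrank_eq (Submodule.comapSubtypeEquivOfLe h)
  rw [quotDim]
  omega

theorem trunc_induction (L : ℕ) (P : TruncAlg K r L → Prop)
    (halg : ∀ k, P (algebraMap K _ k)) (hgen : ∀ i, P (gen K r L i))
    (hmul : ∀ a b, P a → P b → P (a * b)) (hadd : ∀ a b, P a → P b → P (a + b))
    (a : TruncAlg K r L) : P a := by
  obtain ⟨a, rfl⟩ := RingQuot.mkAlgHom_surjective K (TruncRel K r L) a
  induction a using FreeAlgebra.induction with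
  | grade0 k =>
    have := (RingQuot.mkAlgHom K (TruncRel K r L)).commutes k
    rw [this]; exact halg k
  | grade1 i => exact hgen i
  | mul a b ha hb => rw [map_mul]; exact hmul _ _ ha hb
  | add a b ha hb => rw [map_add]; exact hadd _ _ ha hb

variable {L : ℕ} {f : Fin r → Module.End K V} (φ : TruncAlg K r L →ₐ[K] Module.End K V)

theorem phi_stable (hφ : ∀ i, φ (gen K r L i) = f i) {X : Submodule K V} (h : FF f X ≤ X)
    (a : TruncAlg K r L) : ∀ x ∈ X, φ a x ∈ X := by
  refine trunc_induction L (fun a => ∀ x ∈ X, φ a x ∈ X) ?_ ?_ ?_ ?_ a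
  · intro k x hx
    rw [AlgHom.commutes, Module.algebraMap_end_apply]
    exact X.smul_mem k hx
  · intro i x hx
    rw [hφ]
    exact h (FF_mem f X i hx)
  · intro a b ha hb x hx
    rw [map_mul, Module.End.mul_apply]
    exact ha _ (hb _ hx)
  · intro a b ha hb x hx
    rw [map_add, LinearMap.add_apply]
    exact X.add_mem (ha _ hx) (hb _ hx)

theorem phi_J (hφ : ∀ i, φ (gen K r L i) = f i) {X : Submodule K V} (h : FF f X ≤ X)
    (a : TruncAlg K r L) (ha : a ∈ Jrad K r L) : ∀ x ∈ X, φ a x ∈ FF f X := by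
  rw [Jrad] at ha
  induction ha using Submodule.mul_induction_on' with
  | mem_mul_mem m hm c _ =>
    intro x hx
    rw [map_mul, Module.End.mul_apply]
    have hx' := phi_stable φ hφ h c x hx
    generalize φ c x = y at hx'
    clear hx
    induction hm using Submodule.mul_induction_on' with
    | mem_mul_mem b _ g hg =>
      rw [map_mul, Module.End.mul_apply]
      apply phi_stable φ hφ (FF_mono f h)
      induction hg using Submodule.span_induction with
      | mem g hg =>
        obtain ⟨i, rfl⟩ := hg
        rw [hφ]
        exact FF_mem f X i hx'
      | zero => simp
      | add a b _ _ ha hb =>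
        rw [map_add, LinearMap.add_apply]
        exact Submodule.add_mem _ ha hb
      | smul k a _ ha =>
        rw [map_smul, LinearMap.smul_apply]
        exact Submodule.smul_mem _ _ ha
    | add a _ b _ ha hb =>
      rw [map_add, LinearMap.add_apply]
      exact Submodule.add_mem _ ha hb
  | add a _ b _ ha hb =>
    intro x hx
    rw [map_add, LinearMap.add_apply]
    exact Submodule.add_mem _ (ha x hx) (hb x hx)

theorem phi_Jpow (hφ : ∀ i, φ (gen K r L i) = f i) (n : ℕ) :
    ∀ {X : Submodule K V} (_ : FF f X ≤ X)
    (a : TruncAlg K r L) (_ : a ∈ Jrad K r L ^ n), ∀ x ∈ X, φ a x ∈ (FF f)^[n] X := by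
  induction n with
  | zero =>
    intro X h a _ x hx
    exact phi_stable φ hφ h a x hx
  | succ n ih =>
    intro X h a ha
    rw [pow_succ] at ha
    induction ha using Submodule.mul_induction_on' with
    | mem_mul_mem b hb c hc =>
      intro x hx
      rw [map_mul, Module.End.mul_apply, Function.iterate_succ_apply]
      exact ih (FF_mono f h) b hb _ (phi_J φ hφ h c hc x hx)
    | add a _ b _ ha hb =>
      intro x hx
      rw [map_add, LinearMap.add_apply]
      exact Submodule.add_mem _ (ha x hx) (hb x hx)

theorem gen_mem (i : Fin r) : gen K r L i ∈ Jrad K r L := by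
  have h : (1 : TruncAlg K r L) * gen K r L i * 1 ∈ Jrad K r L :=
    Submodule.mul_mem_mul (Submodule.mul_mem_mul Submodule.mem_top
      (Submodule.subset_span ⟨i, rfl⟩)) Submodule.mem_top
  simpa using h

theorem phiLayer_eq (hφ : ∀ i, φ (gen K r L i) = f i) (n : ℕ) :
    phiLayer K r L V φ n = (FF f)^[n] ⊤ := by
  apply le_antisymm
  · refine Submodule.span_le.2 ?_
    rintro _ ⟨a, ha, m, rfl⟩
    exact phi_Jpow φ hφ n le_top a ha m Submodule.mem_top
  · induction n with
    | zero =>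
      intro x _
      refine Submodule.subset_span ⟨1, ?_, x, by simp⟩
      rw [pow_zero]
      exact Submodule.one_le.1 le_rfl
    | succ n ih =>
      rw [Function.iterate_succ_apply']
      refine (FF_mono f ih).trans (iSup_le fun i => ?_)
      rw [phiLayer, Submodule.map_span_le]
      rintro _ ⟨a, ha, m, rfl⟩
      refine Submodule.subset_span ⟨gen K r L i * a, ?_, m, ?_⟩
      · rw [pow_succ']
        exact Submodule.mul_mem_mul (gen_mem i) ha
      · rw [map_mul, hφ, Module.End.mul_apply]

/-- tails -/
def WW (Vsub : Fin (L + 1) → Submodule K V) (n : ℕ) : Submodule K V :=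
  ⨆ (u : Fin (L + 1)) (_ : n ≤ (u : ℕ)), Vsub u

theorem WW_sup (Vsub : Fin (L + 1) → Submodule K V) (l : Fin (L + 1)) :
    WW Vsub l = Vsub l ⊔ WW Vsub ((l : ℕ) + 1) := by
  apply le_antisymm
  · refine iSup₂_le fun u hu => ?_
    rcases hu.eq_or_lt with h | h
    · rw [← Fin.ext h]; exact le_sup_left
    · exact (le_iSup₂ (f := fun (u : Fin (L + 1)) (_ : (l : ℕ) + 1 ≤ (u : ℕ)) => Vsub u) u
        h).trans le_sup_right
  · refine sup_le (le_iSup₂ (f := fun (u : Fin (L + 1)) (_ : (l : ℕ) ≤ (u : ℕ)) => Vsub u) l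
      le_rfl) ?_
    exact iSup₂_le fun u hu =>
      le_iSup₂ (f := fun (u : Fin (L + 1)) (_ : (l : ℕ) ≤ (u : ℕ)) => Vsub u) u (by omega)

theorem WW_anti (Vsub : Fin (L + 1) → Submodule K V) {a b : ℕ} (h : a ≤ b) :
    WW Vsub b ≤ WW Vsub a :=
  iSup₂_le fun u hu =>
      le_iSup₂ (f := fun (u : Fin (L + 1)) (_ : a ≤ (u : ℕ)) => Vsub u) u (by omega)

theorem WW_bot (Vsub : Fin (L + 1) → Submodule K V) {a : ℕ} (h : L + 1 ≤ a) :
    WW Vsub a = ⊥ := by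
  rw [eq_bot_iff]
  exact iSup₂_le fun u hu => by omega

theorem WW_finrank [FiniteDimensional K V] (Vsub : Fin (L + 1) → Submodule K V)
    (hdec : DirectSum.IsInternal Vsub) (l : Fin (L + 1)) :
    Module.finrank K (WW Vsub l)
      = Module.finrank K (Vsub l) + Module.finrank K (WW Vsub ((l : ℕ) + 1)) := by
  have hd : Disjoint (Vsub l) (WW Vsub ((l : ℕ) + 1)) := by
    refine (hdec.submodule_iSupIndep l).mono_right ?_
    refine iSup₂_le fun u hu => le_iSup₂ (f := fun (u : Fin (L + 1)) (_ : u ≠ l) => Vsub u) u ?_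
    rintro rfl
    omega
  have h3 := Submodule.finrank_sup_add_finrank_inf_eq (Vsub l) (WW Vsub ((l : ℕ) + 1))
  rw [hd.eq_bot, finrank_bot, ← WW_sup] at h3
  omega

theorem FF_WW (Vsub : Fin (L + 1) → Submodule K V)
    (hf : ∀ (i : Fin r) (l : Fin (L + 1)),
      (Vsub l).map (f i) ≤ ⨆ (u : Fin (L + 1)) (_ : l < u), Vsub u) (n : ℕ) :
    FF f (WW Vsub n) ≤ WW Vsub (n + 1) := by
  refine iSup_le fun i => ?_
  simp only [WW, Submodule.map_iSup]
  refine iSup₂_le fun u hu => (hf i u).trans ?_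
  refine iSup₂_le fun v hv => ?_
  rw [Fin.lt_def] at hv
  exact le_iSup₂ (f := fun (u : Fin (L + 1)) (_ : n + 1 ≤ (u : ℕ)) => Vsub u) v (by omega)

theorem FF_iter_WW (Vsub : Fin (L + 1) → Submodule K V)
    (hf : ∀ (i : Fin r) (l : Fin (L + 1)),
      (Vsub l).map (f i) ≤ ⨆ (u : Fin (L + 1)) (_ : l < u), Vsub u) (n k : ℕ) :
    (FF f)^[k] (WW Vsub n) ≤ WW Vsub (n + k) := by
  induction k with
  | zero => exact le_rfl
  | succ k ih =>
    rw [Function.iterate_succ_apply']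
    exact (FF_mono f ih).trans (FF_WW Vsub hf _)

theorem WW_zero (Vsub : Fin (L + 1) → Submodule K V)
    (hdec : DirectSum.IsInternal Vsub) : WW Vsub 0 = ⊤ := by
  rw [← hdec.submodule_iSup_eq_top]
  simp [WW]

/-- dimension condition in terms of layers -/
theorem claimA [FiniteDimensional K V] (Vsub : Fin (L + 1) → Submodule K V)
    (hdec : DirectSum.IsInternal Vsub)
    (hf : ∀ (i : Fin r) (l : Fin (L + 1)),
      (Vsub l).map (f i) ≤ ⨆ (u : Fin (L + 1)) (_ : l < u), Vsub u)
    (hφ : ∀ i, φ (gen K r L i) = f i) (m : Fin (L + 1)) :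
    (∀ l : Fin (L + 1), l ≤ m → phiRad K r L V φ l = Module.finrank K ↥(Vsub l)) ↔
    (∀ l : Fin (L + 1), l ≤ m → FF f (WW Vsub l) = WW Vsub ((l : ℕ) + 1)) := by
  have hrad : ∀ l : Fin (L + 1), phiRad K r L V φ l +
      Module.finrank K ↥((FF f)^[(l : ℕ) + 1] (⊤ : Submodule K V)) =
      Module.finrank K ↥((FF f)^[(l : ℕ)] (⊤ : Submodule K V)) := by
    intro l
    rw [phiRad, phiLayer_eq φ hφ, phiLayer_eq φ hφ]
    exact quotDim_add (FF_iter_succ_le f le_top _)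
  constructor
  · intro h
    have key : ∀ n : ℕ, n ≤ (m : ℕ) + 1 → (FF f)^[n] (⊤ : Submodule K V) = WW Vsub n := by
      intro n
      induction n with
      | zero => intro _; rw [WW_zero Vsub hdec]; rfl
      | succ n ih =>
        intro hn
        have hn' : n < L + 1 := by omega
        have h1 := ih (by omega)
        have h2 := hrad ⟨n, hn'⟩
        have h3 := WW_finrank Vsub hdec ⟨n, hn'⟩
        rw [h ⟨n, hn'⟩ (by rw [Fin.le_def]; simp; omega)] at h2
        simp only at h2 h3
        rw [h1] at h2
        refine Submodule.eq_of_le_of_finrank_eq ?_ (by omega)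
        rw [Function.iterate_succ_apply', h1]
        exact FF_WW Vsub hf n
    intro l hl
    rw [Fin.le_def] at hl
    rw [← key l (by omega), ← key (l + 1) (by omega), Function.iterate_succ_apply']
  · intro h
    have key : ∀ n : ℕ, n ≤ (m : ℕ) + 1 → (FF f)^[n] (⊤ : Submodule K V) = WW Vsub n := by
      intro n
      induction n with
      | zero => intro _; rw [WW_zero Vsub hdec]; rfl
      | succ n ih =>
        intro hn
        have hn' : n < L + 1 := by omega
        rw [Function.iterate_succ_apply', ih (by omega)]
        exact h ⟨n, hn'⟩ (by rw [Fin.le_def]; simp; omega)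
    intro l hl
    rw [Fin.le_def] at hl
    have h2 := hrad l
    rw [key l (by omega), key (l + 1) (by omega)] at h2
    have h3 := WW_finrank Vsub hdec l
    omega

theorem claimB (Vsub : Fin (L + 1) → Submodule K V)
    (hf : ∀ (i : Fin r) (l : Fin (L + 1)),
      (Vsub l).map (f i) ≤ ⨆ (u : Fin (L + 1)) (_ : l < u), Vsub u) (l : Fin (L + 1)) :
    FF f (WW Vsub l) = WW Vsub ((l : ℕ) + 1) ↔ WW Vsub ((l : ℕ) + 1) ≤ SS f (Vsub l) := by
  have hst : FF f (WW Vsub l) ≤ WW Vsub l := (FF_WW Vsub hf l).trans (WW_anti _ (by omega))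
  constructor
  · intro h
    rw [← h]
    refine naka f ?_ (L + 1) ?_
    · rw [h, ← WW_sup]
    · rw [eq_bot_iff]
      refine (FF_iter_WW Vsub hf _ _).trans ?_
      rw [WW_bot]
      omega
  · intro h
    refine le_antisymm (FF_WW Vsub hf l) (h.trans (SS_le f hst ?_))
    rw [WW_sup]
    exact le_sup_left

end Aux

/-- Let `V = ⊕_{l=0}^L V_l`, `f_1,…,f_r` endomorphisms with
`f_i(V_l) ⊆ ⊕_{u>l} V_u`, and `M` the resulting `Λ`-module structure (given by `φ`).
Then for every `m ≤ L`: `dim(J^l M/J^{l+1} M) = dim V_l` for all `l ≤ m` iff for every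
`l ≤ m` the sum of the images of `V_l` under all nonempty compositions of the `f_i`
contains `⊕_{u>l} V_u`.  In particular `rad(M) = (dim V_0,…,dim V_L)` iff for every
`0 ≤ l < L` the image of `∑_i f_i(V_l)` in `V/(⊕_{u≥l+2} V_u)` has dimension
`dim V_{l+1}`. -/
theorem stmt15 (K : Type) [Field K] [IsAlgClosed K] (r L : ℕ) (hr : 0 < r) (hL : 0 < L)
    (V : Type) [AddCommGroup V] [Module K V] [FiniteDimensional K V]
    (Vsub : Fin (L + 1) → Submodule K V) (hdec : DirectSum.IsInternal Vsub)
    (f : Fin r → Module.End K V)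
    (hf : ∀ (i : Fin r) (l : Fin (L + 1)),
      (Vsub l).map (f i) ≤ ⨆ (u : Fin (L + 1)) (_ : l < u), Vsub u)
    (φ : TruncAlg K r L →ₐ[K] Module.End K V) (hφ : ∀ i, φ (gen K r L i) = f i) :
    (∀ m : Fin (L + 1),
      ((∀ l : Fin (L + 1), l ≤ m → phiRad K r L V φ l = Module.finrank K ↥(Vsub l)) ↔
        (∀ l : Fin (L + 1), l ≤ m →
          (⨆ (u : Fin (L + 1)) (_ : l < u), Vsub u) ≤
            ⨆ (c : List (Fin r)) (_ : c ≠ []), (Vsub l).map (c.map f).prod))) ∧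
    ((phiRad K r L V φ = fun l => Module.finrank K ↥(Vsub l)) ↔
      (∀ l : Fin L,
        Module.finrank K
            ↥((⨆ i : Fin r, (Vsub l.castSucc).map (f i)).map
              (Submodule.mkQ
                (⨆ (u : Fin (L + 1)) (_ : (l : ℕ) + 2 ≤ (u : ℕ)), Vsub u)))
          = Module.finrank K ↥(Vsub l.succ))) := by
  have hlt : ∀ l : Fin (L + 1), (⨆ (u : Fin (L + 1)) (_ : l < u), Vsub u)
      = WW Vsub ((l : ℕ) + 1) := fun l => rfl
  have hA := claimA φ Vsub hdec hf hφ
  constructor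
  · intro m
    rw [hA m]
    exact forall₂_congr fun l _ => claimB Vsub hf l
  · have h1 : (phiRad K r L V φ = fun l => Module.finrank K ↥(Vsub l)) ↔
        ∀ l : Fin (L + 1), FF f (WW Vsub l) = WW Vsub ((l : ℕ) + 1) := by
      have := hA (Fin.last L)
      simp only [Fin.le_last, forall_true_left] at this
      rw [← this, funext_iff]
    have h2 : ∀ l : Fin L, (Module.finrank K
            ↥((⨆ i : Fin r, (Vsub l.castSucc).map (f i)).map
              (Submodule.mkQ
                (⨆ (u : Fin (L + 1)) (_ : (l : ℕ) + 2 ≤ (u : ℕ)), Vsub u)))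
          = Module.finrank K ↥(Vsub l.succ)) ↔
          FF f (Vsub l.castSucc) ⊔ WW Vsub ((l : ℕ) + 2) = WW Vsub ((l : ℕ) + 1) := by
      intro l
      have e1 := finrank_map_mkQ (FF f (Vsub l.castSucc)) (WW Vsub ((l : ℕ) + 2))
      have e2 := WW_finrank Vsub hdec l.succ
      simp only [Fin.val_succ] at e2
      change Module.finrank K ↥((FF f (Vsub l.castSucc)).map (WW Vsub ((l : ℕ) + 2)).mkQ)
        = _ ↔ _
      constructor
      · intro h
        refine Submodule.eq_of_le_of_finrank_eq (sup_le (iSup_le fun i => hf i _)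
          (WW_anti _ (by omega))) ?_
        rw [← e1, h, e2]
      · intro h
        rw [h, e2] at e1
        exact Nat.add_right_cancel e1
    rw [h1]
    simp only [h2]
    constructor
    · intro h l
      have h3 := h l.castSucc
      refine le_antisymm (sup_le (iSup_le fun i => hf i _) (WW_anti _ (by omega))) ?_
      rw [WW_sup, FF_sup] at h3
      have h4 := FF_WW Vsub hf ((l : ℕ) + 1)
      simp only [Fin.val_castSucc] at h3
      rw [← h3]
      exact sup_le_sup_left h4 _
    · intro h
      have key : ∀ k n : ℕ, n + k = L → FF f (WW Vsub n) = WW Vsub (n + 1) := by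
        intro k
        induction k with
        | zero =>
          intro n hn
          refine le_antisymm (FF_WW Vsub hf n) ?_
          rw [WW_bot Vsub (by omega)]
          exact bot_le
        | succ k ih =>
          intro n hn
          have h5 := h ⟨n, by omega⟩
          have h6 := WW_sup Vsub (Fin.castSucc ⟨n, by omega⟩)
          simp only [Fin.val_castSucc] at h5 h6
          rw [h6, FF_sup, ih (n + 1) (by omega)]
          exact h5
      intro l
      exact key (L - l) l (by omega)
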